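/- For all integers r ≥ 1, s ≥ 0 and k ≥ 0, one has the identity in ℚ: ⟨k+2 choose s⟩_r · ⟨k choose s⟩_r · (k+1) · (k-s+r+1) = (⟨k+1 choose s⟩_r)^2 · (k-s+1) · (k+r+1), where k-s+r+1 and k-s+1 are interpreted as integers (possibly negative). -/

import Mathlib

/-- The `r`-Hoggatt binomial `⟨n choose k⟩_r = ∏_{j=0}^{r-1} C(n+j,k)/C(k+j,k)`, as a
rational number. -/
def hoggatt (r n k : ℕ) : ℚ :=
  ∏ j ∈ Finset.range r, ((n + j).choose k : ℚ) / ((k + j).choose k : ℚ)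

lemma hoggatt_step (r n s : ℕ) :
    hoggatt r (n + 1) s * (n.choose s : ℚ) = hoggatt r n s * ((n + r).choose s : ℚ) := by
  induction r with
  | zero => simp [hoggatt]
  | succ r ih =>
    unfold hoggatt at *
    rw [Finset.prod_range_succ, Finset.prod_range_succ]
    have e : n + 1 + r = n + (r + 1) := by omega
    rw [e]
    linear_combination (((n + (r + 1)).choose s : ℚ) / ((s + r).choose s : ℚ)) * ih

lemma hoggatt_zero (r n s : ℕ) (hr : 1 ≤ r) (h : n < s) : hoggatt r n s = 0 := by
  unfold hoggatt
  apply Finset.prod_eq_zero (i := 0) (Finset.mem_range.2 hr)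
  simp [Nat.choose_eq_zero_of_lt h]

lemma choose_step (n s : ℕ) (h : s ≤ n) :
    ((n + 1).choose s : ℚ) * ((n : ℚ) - s + 1) = (n.choose s : ℚ) * ((n : ℚ) + 1) := by
  have e := Nat.choose_mul_succ_eq n s
  have e2 : ((n.choose s * (n + 1) : ℕ) : ℚ) = (((n + 1).choose s * (n + 1 - s) : ℕ) : ℚ) := by
    rw [e]
  push_cast [Nat.cast_sub (show s ≤ n + 1 by omega)] at e2
  linear_combination -e2

/-- For `r ≥ 1` and `s, k ≥ 0`, the identity in `ℚ`:
`⟨k+2 choose s⟩_r · ⟨k choose s⟩_r · (k+1) · (k-s+r+1)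
  = ⟨k+1 choose s⟩_r² · (k-s+1) · (k+r+1)`. -/
theorem hoggatt_shift_ratio_identity (r s k : ℕ) (hr : 1 ≤ r) :
    hoggatt r (k + 2) s * hoggatt r k s *
        ((k : ℚ) + 1) * ((k : ℚ) - s + r + 1) =
    (hoggatt r (k + 1) s) ^ 2 * ((k : ℚ) - s + 1) * ((k : ℚ) + r + 1) := by
  rcases le_or_gt s k with h | h
  · have h1 := hoggatt_step r k s
    have h2 := hoggatt_step r (k + 1) s
    have h3 := choose_step k s h
    have h4 := choose_step (k + r) s (by omega)
    rw [show k + 1 + r = k + r + 1 by omega] at h2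
    have a0 : (k.choose s : ℚ) ≠ 0 := by exact_mod_cast (Nat.choose_pos h).ne'
    have b0 : ((k + 1).choose s : ℚ) ≠ 0 := by
      exact_mod_cast (Nat.choose_pos (show s ≤ k + 1 by omega)).ne'
    have c0 : ((k + r).choose s : ℚ) ≠ 0 := by
      exact_mod_cast (Nat.choose_pos (show s ≤ k + r by omega)).ne'
    push_cast at h4
    rw [show k + 1 + 1 = k + 2 from rfl] at h2
    apply mul_right_cancel₀ (mul_ne_zero (mul_ne_zero a0 b0) c0)
    generalize hoggatt r (k + 2) s = H2 at *
    generalize hoggatt r (k + 1) s = H1 at *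
    generalize hoggatt r k s = H0 at *
    generalize (k.choose s : ℚ) = a at *
    generalize ((k + 1).choose s : ℚ) = b at *
    generalize ((k + r).choose s : ℚ) = c at *
    generalize ((k + r + 1).choose s : ℚ) = d at *
    linear_combination (H0 * c * a * ((k : ℚ) + 1) * ((k : ℚ) - s + r + 1)) * h2
      - (H1 * d * a * ((k : ℚ) + 1) * ((k : ℚ) - s + r + 1)) * h1
      + (H1 ^ 2 * a * a * ((k : ℚ) + 1)) * h4
      - (H1 ^ 2 * a * c * ((k : ℚ) + r + 1)) * h3
  · rw [hoggatt_zero r k s hr h]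
    rcases Nat.lt_or_ge (k + 1) s with h' | h'
    · rw [hoggatt_zero r (k + 1) s hr h']
      ring
    · obtain rfl : s = k + 1 := by omega
      push_cast
      ring
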